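/- For every s with 0<s≤1, lim_{m→∞} Π_m{ n ≤ p_m^s } = lim_{m→∞} Σ_{n∈Ω_m, n≤p_m^s} π_m(n) = e^{−γ}·s. -/

import Mathlib

open Filter
open scoped Topology

noncomputable section

/-- The `j`-th prime number, `0`-indexed: `nthPrime 0 = 2`, `nthPrime 1 = 3`, … -/
def nthPrime (j : ℕ) : ℕ := Nat.nth Nat.Prime j

/-- The partition function `Z_m = ∏_{j=1}^m (1 + 1/p_j)`. -/
def Zm (m : ℕ) : ℝ := ∏ j ∈ Finset.range m, (1 + 1 / (nthPrime j : ℝ))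

/-- The element `n = ∏_{j=1}^m p_j^{ν_j}` of `Ω_m` parametrized by `ν ∈ {0,1}^m`. -/
def elt (m : ℕ) (ν : Fin m → Bool) : ℕ := ∏ j : Fin m, if ν j then nthPrime j else 1

/-- The mass `π_m(n) = 1/(Z_m n)`. -/
def mass (m : ℕ) (ν : Fin m → Bool) : ℝ := 1 / (Zm m * (elt m ν : ℝ))

def zr (s : ℝ) : ℝ := ∑' n : ℕ, 1 / (n : ℝ) ^ s

def powHom (s : ℝ) (hs : s ≠ 0) : ℕ →*₀ ℝ where
  toFun n := 1 / (n : ℝ) ^ s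
  map_zero' := by simp [Real.zero_rpow hs]
  map_one' := by simp
  map_mul' a b := by
    push_cast
    rw [Real.mul_rpow (by positivity) (by positivity)]
    simp [mul_comm]

lemma zr_pos {s : ℝ} (hs : 1 < s) : 0 < zr s := by
  refine Summable.tsum_pos (Real.summable_one_div_nat_rpow.2 hs) (fun n => by positivity) 1 ?_
  simp

/-- x = n^{-s} bounds for primes -/
lemma pw_bounds {s : ℝ} (hs : 1 ≤ s) {n : ℕ} (hn : n.Prime) :
    0 < 1 / (n : ℝ) ^ s ∧ 1 / (n : ℝ) ^ s ≤ 1 / n ∧ 1 / (n : ℝ) ^ s ≤ 1 / 2 := by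
  have h2 : (2 : ℝ) ≤ n := by exact_mod_cast hn.two_le
  have h3 : (n : ℝ) ≤ (n : ℝ) ^ s := by
    conv_lhs => rw [← Real.rpow_one (n : ℝ)]
    exact Real.rpow_le_rpow_of_exponent_le (by linarith) hs
  refine ⟨by positivity, ?_, ?_⟩
  · exact one_div_le_one_div_of_le (by linarith) h3
  · exact one_div_le_one_div_of_le (by linarith) (by linarith)

lemma log_bounds {x : ℝ} (h0 : 0 < x) (h1 : x ≤ 1 / 2) :
    0 ≤ -Real.log (1 - x) - x ∧ -Real.log (1 - x) - x ≤ 2 * x ^ 2 := by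
  have hp : 0 < 1 - x := by linarith
  constructor
  · have := Real.log_le_sub_one_of_pos hp
    linarith
  · have := Real.one_sub_inv_le_log_of_pos hp
    have h : (1 - x)⁻¹ - 1 - x = x ^ 2 / (1 - x) := by field_simp; ring
    have h' : x ^ 2 / (1 - x) ≤ 2 * x ^ 2 := by
      rw [div_le_iff₀ hp]; nlinarith [sq_nonneg x]
    linarith

def eE (s : ℝ) (n : ℕ) : ℝ :=
  if n.Prime then -Real.log (1 - 1 / (n : ℝ) ^ s) - 1 / (n : ℝ) ^ s else 0

lemma eE_bd {s : ℝ} (hs : 1 ≤ s) (n : ℕ) : ‖eE s n‖ ≤ 2 * (1 / (n : ℝ) ^ (2 : ℝ)) := by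
  unfold eE
  split_ifs with hn
  · obtain ⟨h0, h1, h2⟩ := pw_bounds hs hn
    obtain ⟨h3, h4⟩ := log_bounds h0 h2
    rw [Real.norm_of_nonneg h3]
    refine h4.trans ?_
    have : (1 / (n : ℝ) ^ s) ^ 2 ≤ (1 / (n : ℝ)) ^ 2 := by gcongr
    rw [Real.rpow_two]
    simpa using this
  · simp

lemma eE_dom : Summable (fun n : ℕ => 2 * (1 / (n : ℝ) ^ (2 : ℝ))) :=
  (Real.summable_one_div_nat_rpow.2 (by norm_num)).mul_left _

lemma eE_summable {s : ℝ} (hs : 1 ≤ s) : Summable (eE s) :=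
  Summable.of_norm_bounded eE_dom (eE_bd hs)

lemma eE_tendsto : Tendsto (fun s : ℝ => ∑' n, eE s n) (𝓝[>] 1) (𝓝 (∑' n, eE 1 n)) := by
  refine tendsto_tsum_of_dominated_convergence eE_dom ?_ ?_
  · intro n
    refine Tendsto.mono_left ?_ nhdsWithin_le_nhds
    unfold eE
    split_ifs with hn
    · have h2 : (2 : ℝ) ≤ n := by exact_mod_cast hn.two_le
      have hc : ContinuousAt (fun s : ℝ => 1 / (n : ℝ) ^ s) 1 := by
        apply ContinuousAt.div continuousAt_const
        · exact (Real.continuousAt_const_rpow (by positivity))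
        · positivity
      obtain ⟨h0, h1, h2⟩ := pw_bounds le_rfl hn
      have : ContinuousAt (fun s : ℝ => -Real.log (1 - 1 / (n : ℝ) ^ s) - 1 / (n : ℝ) ^ s) 1 :=
        ((continuousAt_const.sub hc).log
          (show (1:ℝ) - 1 / (n : ℝ) ^ (1:ℝ) ≠ 0 from (by linarith : (0:ℝ) < _).ne')).neg.sub hc
      exact this
    · exact tendsto_const_nhds
  · filter_upwards [self_mem_nhdsWithin] with s hs n
    exact eE_bd (le_of_lt hs) n

lemma pp_summable {s : ℝ} (hs : 1 < s) :
    Summable (fun n : ℕ => if n.Prime then 1 / (n : ℝ) ^ s else 0) := by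
  refine Summable.of_norm_bounded (Real.summable_one_div_nat_rpow.2 hs) ?_
  intro n
  split_ifs
  · rw [Real.norm_of_nonneg (by positivity)]
  · simp; positivity

lemma logprod (N : ℕ) (f : ℕ → ℝ) (hf : ∀ n, n.Prime → 0 < f n) :
    Real.log (∏ p ∈ N.primesBelow, f p) =
      ∑ n ∈ Finset.range N, if n.Prime then Real.log (f n) else 0 := by
  rw [Real.log_prod, Nat.primesBelow, Finset.sum_filter]
  intro p hp
  exact (hf p (Nat.prime_of_mem_primesBelow hp)).ne'

lemma log_zr {s : ℝ} (hs : 1 < s) :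
    HasSum (fun n : ℕ => if n.Prime then -Real.log (1 - 1 / (n : ℝ) ^ s) else 0)
      (Real.log (zr s)) := by
  have hsum : Summable (fun n : ℕ => if n.Prime then -Real.log (1 - 1 / (n : ℝ) ^ s) else 0) := by
    refine ((eE_summable hs.le).add (pp_summable hs)).congr ?_
    intro n
    unfold eE
    split_ifs <;> ring
  have h := EulerProduct.eulerProduct_completely_multiplicative
    (f := powHom s (by linarith)) (by
      refine (Real.summable_one_div_nat_rpow.2 hs).congr fun n => ?_
      change _ = ‖1 / (n : ℝ) ^ s‖
      rw [Real.norm_of_nonneg (by positivity)])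
  have h2 := ((Real.continuousAt_log (zr_pos hs).ne').tendsto.comp h)
  have h3 := hsum.hasSum.tendsto_sum_nat
  have : ∑' n : ℕ, (if n.Prime then -Real.log (1 - 1 / (n : ℝ) ^ s) else 0) = Real.log (zr s) := by
    refine tendsto_nhds_unique h3 (h2.congr ?_)
    intro N
    simp only [Function.comp]
    rw [logprod N (fun p => (1 - powHom s (by linarith) p)⁻¹)]
    · refine Finset.sum_congr rfl fun n _ => ?_
      split_ifs
      · rw [Real.log_inv]; rfl
      · rfl
    · intro n hn
      obtain ⟨h0, h1, h2⟩ := pw_bounds hs.le hn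
      have : powHom s (by linarith) n = 1 / (n : ℝ) ^ s := rfl
      rw [this]
      have : 0 < 1 - 1 / (n : ℝ) ^ s := by linarith
      positivity
  rw [← this]; exact hsum.hasSum

/-- prime zeta asymptotics -/
lemma primezeta : Tendsto (fun σ : ℝ => (∑' n : ℕ, if n.Prime then 1 / (n : ℝ) ^ (1 + σ) else 0)
    + Real.log σ) (𝓝[>] 0) (𝓝 (-∑' n, eE 1 n)) := by
  have hm : Tendsto (fun σ : ℝ => 1 + σ) (𝓝[>] 0) (𝓝[>] 1) := by
    refine tendsto_nhdsWithin_iff.2 ⟨?_, ?_⟩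
    · refine Tendsto.mono_left ?_ nhdsWithin_le_nhds
      have : Continuous (fun σ : ℝ => 1 + σ) := by fun_prop
      simpa using this.tendsto 0
    · filter_upwards [self_mem_nhdsWithin] with σ hσ
      have : (0:ℝ) < σ := hσ
      simpa using this
  have h1 := tendsto_sub_mul_tsum_nat_rpow.comp hm
  have h2 := (Real.continuousAt_log one_ne_zero).tendsto.comp h1
  have h3 := eE_tendsto.comp hm
  have h4 := h2.sub h3
  rw [Real.log_one, zero_sub] at h4
  refine h4.congr' ?_
  filter_upwards [self_mem_nhdsWithin] with σ hσ
  have hσ : (0:ℝ) < σ := hσ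
  have hs : 1 < 1 + σ := by linarith
  simp only [Function.comp, add_sub_cancel_left]
  have hz : ∑' n : ℕ, 1 / (n : ℝ) ^ (1 + σ) = zr (1 + σ) := rfl
  rw [hz, Real.log_mul hσ.ne' (zr_pos hs).ne', ← (log_zr hs).tsum_eq]
  rw [add_sub_assoc, ← (log_zr hs).summable.tsum_sub (eE_summable hs.le), add_comm]
  congr 1
  refine tsum_congr fun n => ?_
  unfold eE
  split_ifs <;> ring
open MeasureTheory in
lemma laplace {a l : ℕ → ℝ} (ha : ∀ i, 0 ≤ a i) (hl : ∀ i, 0 ≤ l i)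
    (hs : Summable (fun i => a i * Real.exp (-l i))) (hp : ∃ i, 0 < a i) :
    IntegrableOn (fun v : ℝ => ∑' i, if l i ≤ v then a i * Real.exp (-v) else 0) (Set.Ioi 0) ∧
    ∫ v in Set.Ioi (0:ℝ), (∑' i, if l i ≤ v then a i * Real.exp (-v) else 0) =
      ∑' i, a i * Real.exp (-l i) := by
  have key : ∀ i, (fun v : ℝ => if l i ≤ v then a i * Real.exp (-v) else 0) =
      Set.indicator (Set.Ici (l i)) (fun v => a i * Real.exp (-v)) := by
    intro i; ext v; simp [Set.indicator]
  have hint : ∀ i, IntegrableOn (fun v : ℝ => a i * Real.exp (-v)) (Set.Ici (l i)) := by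
    intro i
    rw [integrableOn_Ici_iff_integrableOn_Ioi]
    exact (integrableOn_exp_neg_Ioi (l i)).const_mul _
  have h1 : ∀ i, Integrable (fun v : ℝ => if l i ≤ v then a i * Real.exp (-v) else 0)
      (volume.restrict (Set.Ioi 0)) := by
    intro i
    rw [key]
    exact ((integrable_indicator_iff measurableSet_Ici).2 (hint i)).integrableOn
  have h2 : ∀ i, ∫ v in Set.Ioi (0:ℝ), (if l i ≤ v then a i * Real.exp (-v) else 0) =
      a i * Real.exp (-l i) := by
    intro i
    rw [key, ← integral_Ici_eq_integral_Ioi, setIntegral_indicator measurableSet_Ici,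
      Set.inter_eq_right.2 (Set.Ici_subset_Ici.2 (hl i)), integral_Ici_eq_integral_Ioi,
      integral_const_mul, integral_exp_neg_Ioi]
  have h3 : ∀ i, ∫ v in Set.Ioi (0:ℝ), ‖(if l i ≤ v then a i * Real.exp (-v) else 0)‖ =
      a i * Real.exp (-l i) := by
    intro i
    rw [← h2]
    congr 1; ext v
    rw [Real.norm_of_nonneg]
    split_ifs
    · exact mul_nonneg (ha i) (Real.exp_pos _).le
    · rfl
  have h4 := hasSum_integral_of_summable_integral_norm h1 (by simpa only [h3] using hs)
  simp only [h2] at h4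
  refine ⟨?_, h4.tsum_eq.symm⟩
  apply Integrable.of_integral_ne_zero
  rw [← h4.tsum_eq]
  obtain ⟨i, hi⟩ := hp
  exact (hs.tsum_pos (fun i => mul_nonneg (ha i) (Real.exp_pos _).le) i
    (mul_pos hi (Real.exp_pos _))).ne'

open MeasureTheory in
/-- Abelian comparison. -/
lemma abel_cmp {a l b k : ℕ → ℝ} (ha : ∀ i, 0 ≤ a i) (hl : ∀ i, 0 ≤ l i)
    (hb : ∀ i, 0 ≤ b i) (hk : ∀ i, 0 ≤ k i)
    (hsa : ∀ σ > 0, Summable (fun i => a i * Real.exp (-(σ * l i))))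
    (hsb : ∀ σ > 0, Summable (fun i => b i * Real.exp (-(σ * k i))))
    (hpa : ∃ i, 0 < a i) (hpb : ∃ i, 0 < b i)
    (F : ℝ → ℝ) (hF : ∀ t, 0 ≤ t → F t = (∑' i, if l i ≤ t then a i else 0) -
      ∑' i, if k i ≤ t then b i else 0)
    (C : ℝ) (hC : ∀ t, 0 ≤ t → |F t| ≤ C) (L : ℝ) (hL : Tendsto F atTop (𝓝 L)) :
    Tendsto (fun σ : ℝ => (∑' i, a i * Real.exp (-(σ * l i))) -
      ∑' i, b i * Real.exp (-(σ * k i))) (𝓝[>] 0) (𝓝 L) := by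
  have eqn : ∀ σ > 0, IntegrableOn (fun v => F (v / σ) * Real.exp (-v)) (Set.Ioi 0) ∧
      ∫ v in Set.Ioi (0:ℝ), F (v / σ) * Real.exp (-v) =
      (∑' i, a i * Real.exp (-(σ * l i))) - ∑' i, b i * Real.exp (-(σ * k i)) := by
    intro σ hσ
    obtain ⟨i1, e1⟩ := laplace (l := fun i => σ * l i) ha (fun i => mul_nonneg hσ.le (hl i))
      (hsa σ hσ) hpa
    obtain ⟨i2, e2⟩ := laplace (l := fun i => σ * k i) hb (fun i => mul_nonneg hσ.le (hk i))
      (hsb σ hσ) hpb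
    have e : Set.EqOn (fun v => F (v / σ) * Real.exp (-v)) (fun v =>
        (∑' i, if σ * l i ≤ v then a i * Real.exp (-v) else 0) -
        (∑' i, if σ * k i ≤ v then b i * Real.exp (-v) else 0)) (Set.Ioi 0) := by
      intro v hv
      have hv : 0 < v := hv
      simp only
      rw [hF _ (by positivity), sub_mul, ← tsum_mul_right, ← tsum_mul_right]
      simp only [le_div_iff₀' hσ, ite_mul, zero_mul]
    constructor
    · exact (integrableOn_congr_fun e measurableSet_Ioi).2 (i1.sub i2)
    · rw [setIntegral_congr_fun measurableSet_Ioi e, integral_sub i1 i2, e1, e2]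
  have hexp : ∫ v in Set.Ioi (0:ℝ), L * Real.exp (-v) = L := by
    rw [integral_const_mul, integral_exp_neg_Ioi]; simp
  have main : Tendsto (fun σ : ℝ => ∫ v in Set.Ioi (0:ℝ), F (v / σ) * Real.exp (-v))
      (𝓝[>] 0) (𝓝 (∫ v in Set.Ioi (0:ℝ), L * Real.exp (-v))) := by
    refine tendsto_integral_filter_of_dominated_convergence (fun v => C * Real.exp (-v)) ?_ ?_ ?_ ?_
    · filter_upwards [self_mem_nhdsWithin] with σ hσ
      exact (eqn σ hσ).1.aestronglyMeasurable
    · filter_upwards [self_mem_nhdsWithin] with σ hσ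
      filter_upwards [ae_restrict_mem measurableSet_Ioi] with v hv
      have hσ : 0 < σ := hσ
      have hv : 0 < v := hv
      rw [norm_mul, Real.norm_eq_abs, Real.norm_of_nonneg (Real.exp_pos _).le]
      exact mul_le_mul_of_nonneg_right (hC _ (by positivity)) (Real.exp_pos _).le
    · exact (integrableOn_exp_neg_Ioi 0).const_mul _
    · filter_upwards [ae_restrict_mem measurableSet_Ioi] with v hv
      have hv : 0 < v := hv
      refine Tendsto.mul_const _ (hL.comp ?_)
      refine Tendsto.congr (fun σ => (div_eq_mul_inv v σ).symm) ?_
      exact tendsto_inv_nhdsGT_zero.const_mul_atTop hv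
  rw [hexp] at main
  refine main.congr' ?_
  filter_upwards [self_mem_nhdsWithin] with σ hσ
  exact (eqn σ hσ).2
lemma logfac_le (N : ℕ) : Real.log (N.factorial : ℝ) ≤ N * Real.log N := by
  rw [← Real.log_pow]
  apply Real.log_le_log (by exact_mod_cast N.factorial_pos)
  exact_mod_cast N.factorial_le_pow

lemma le_logfac {N : ℕ} (hN : 0 < N) : N * Real.log N - N ≤ Real.log (N.factorial : ℝ) := by
  have h := Real.pow_div_factorial_le_exp (x := N) (by positivity) N
  have hN' : (0:ℝ) < N := by exact_mod_cast hN
  have hf : (0:ℝ) < N.factorial := by exact_mod_cast N.factorial_pos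
  have h2 := Real.log_le_log (by positivity) h
  rw [Real.log_exp, Real.log_div (by positivity) (by positivity), Real.log_pow] at h2
  linarith

lemma logfac_eq (N : ℕ) : Real.log (N.factorial : ℝ) =
    ∑ p ∈ (N+1).primesBelow, (N.factorial.factorization p : ℝ) * Real.log p := by
  conv_lhs => rw [← Nat.prod_factorization_pow_eq_self N.factorial_ne_zero]
  rw [Finsupp.prod_of_support_subset (s := (N+1).primesBelow)]
  · push_cast
    rw [Real.log_prod]
    · simp [Real.log_pow]
    · intro p hp
      have := (Nat.prime_of_mem_primesBelow hp).pos
      positivity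
  · intro p hp
    rw [Nat.support_factorization] at hp
    have h1 := Nat.prime_of_mem_primeFactors hp
    have h2 := Nat.dvd_of_mem_primeFactors hp
    rw [h1.dvd_factorial] at h2
    exact Nat.mem_primesBelow.2 ⟨by omega, h1⟩
  · intros; simp

lemma fac_lower {N p : ℕ} (hp : p.Prime) : (N : ℝ) / p - 1 ≤ (N.factorial.factorization p : ℝ) := by
  have h : N / p ≤ N.factorial.factorization p := by
    rw [Nat.factorization_factorial hp (b := Nat.log p N + 2) (by omega)]
    calc N / p = N / p ^ 1 := by simp
      _ ≤ _ := Finset.single_le_sum (f := fun i => N / p ^ i) (fun _ _ => Nat.zero_le _)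
        (by simp)
  have h2 : (N : ℝ) / p < (N / p : ℕ) + 1 := by
    rw [← Nat.floor_div_eq_div (K := ℝ)]
    exact Nat.lt_floor_add_one _
  have h3 : ((N / p : ℕ) : ℝ) ≤ (N.factorial.factorization p : ℝ) := by exact_mod_cast h
  linarith

lemma fac_upper {N p : ℕ} (hp : p.Prime) :
    (N.factorial.factorization p : ℝ) ≤ N / p + N / (p * (p - 1)) := by
  have := Fact.mk hp
  have h := sub_one_mul_padicValNat_factorial (p := p) N
  rw [← Nat.factorization_def _ hp] at h
  have h1 : (p - 1) * N.factorial.factorization p ≤ N := by omega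
  have h2 : (2:ℝ) ≤ p := by exact_mod_cast hp.two_le
  have h3 : ((p:ℝ) - 1) * N.factorial.factorization p ≤ N := by
    have : (((p - 1 : ℕ) : ℝ)) = (p:ℝ) - 1 := by
      rw [Nat.cast_sub hp.one_le]; simp
    rw [← this]; exact_mod_cast h1
  have h4 : (N:ℝ) / p + N / (p * (p - 1)) = N / (p - 1) := by
    have : (p:ℝ) - 1 ≠ 0 := by linarith
    field_simp; ring
  rw [h4, le_div_iff₀ (by linarith)]
  linarith

def mA (N : ℕ) : ℝ := ∑ p ∈ (N+1).primesBelow, Real.log p / p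

lemma cbound : ∃ C : ℝ, ∀ N : ℕ, ∑ p ∈ (N+1).primesBelow, Real.log p / (p * (p - 1)) ≤ C := by
  have hs : Summable (fun n : ℕ => 4 * (1 / (n : ℝ) ^ (3/2 : ℝ))) :=
    (Real.summable_one_div_nat_rpow.2 (by norm_num)).mul_left _
  refine ⟨∑' n : ℕ, 4 * (1 / (n : ℝ) ^ (3/2 : ℝ)), fun N => ?_⟩
  refine le_trans (Finset.sum_le_sum ?_) (hs.sum_le_tsum (N+1).primesBelow (fun n _ => by positivity))
  intro p hp
  have hp := Nat.prime_of_mem_primesBelow hp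
  have h2 : (2:ℝ) ≤ p := by exact_mod_cast hp.two_le
  have h1 : Real.log p ≤ 2 * (p:ℝ) ^ (1/2 : ℝ) := by
    have := Real.log_le_rpow_div (x := p) (ε := 1/2) (by positivity) (by norm_num)
    linarith
  have h3 : (p:ℝ) ^ (3/2 : ℝ) * (p:ℝ) ^ (1/2:ℝ) = p ^ 2 := by
    rw [← Real.rpow_add (by linarith), ← Real.rpow_two]; norm_num
  have hpos : 0 < (p:ℝ) ^ (3/2 : ℝ) := by positivity
  rw [mul_one_div, div_le_div_iff₀ (by nlinarith) hpos]
  calc Real.log p * (p:ℝ) ^ (3/2 : ℝ) ≤ 2 * (p:ℝ) ^ (1/2 : ℝ) * (p:ℝ) ^ (3/2 : ℝ) := by gcongr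
    _ = 2 * p ^ 2 := by rw [← h3]; ring
    _ ≤ _ := by nlinarith

lemma mertens1 : ∃ C : ℝ, ∀ N : ℕ, 0 < N → |mA N - Real.log N| ≤ C := by
  obtain ⟨C, hC⟩ := cbound
  refine ⟨max (Real.log 4) (1 + C), fun N hN => ?_⟩
  have hN' : (0:ℝ) < N := by exact_mod_cast hN
  have hlog : ∀ p ∈ (N+1).primesBelow, 0 ≤ Real.log p := fun p _ => Real.log_natCast_nonneg p
  have hth : ∑ p ∈ (N+1).primesBelow, Real.log p ≤ Real.log 4 * N := by
    have := Chebyshev.theta_le_log4_mul_x (x := N) (by positivity)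
    rw [Chebyshev.theta_eq_sum_primesLE_log] at this
    refine le_trans (le_of_eq ?_) this
    refine Finset.sum_congr ?_ fun _ _ => rfl
    ext p
    simp [Nat.mem_primesBelow, Nat.mem_primesLE]
  have lo : N * mA N - Real.log 4 * N ≤ N * Real.log N := by
    refine le_trans ?_ (logfac_le N)
    rw [logfac_eq]
    have : ∑ p ∈ (N+1).primesBelow, ((N:ℝ) / p - 1) * Real.log p ≤
        ∑ p ∈ (N+1).primesBelow, (N.factorial.factorization p : ℝ) * Real.log p :=
      Finset.sum_le_sum fun p hp => mul_le_mul_of_nonneg_right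
        (fac_lower (Nat.prime_of_mem_primesBelow hp)) (hlog p hp)
    refine le_trans ?_ this
    have e : ∑ p ∈ (N+1).primesBelow, ((N:ℝ) / p - 1) * Real.log p =
        N * mA N - ∑ p ∈ (N+1).primesBelow, Real.log p := by
      rw [mA, Finset.mul_sum, ← Finset.sum_sub_distrib]
      exact Finset.sum_congr rfl fun p _ => by ring
    linarith
  have up : N * Real.log N - N ≤ N * mA N + N * C := by
    refine (le_logfac hN).trans ?_
    rw [logfac_eq]
    have : ∑ p ∈ (N+1).primesBelow, (N.factorial.factorization p : ℝ) * Real.log p ≤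
        ∑ p ∈ (N+1).primesBelow, ((N:ℝ) / p + N / (p * (p - 1))) * Real.log p :=
      Finset.sum_le_sum fun p hp => mul_le_mul_of_nonneg_right
        (fac_upper (Nat.prime_of_mem_primesBelow hp)) (hlog p hp)
    refine this.trans ?_
    have e : ∑ p ∈ (N+1).primesBelow, ((N:ℝ) / p + N / (p * (p - 1))) * Real.log p =
        N * mA N + N * ∑ p ∈ (N+1).primesBelow, Real.log p / (p * (p - 1)) := by
      rw [mA, Finset.mul_sum, Finset.mul_sum, ← Finset.sum_add_distrib]
      exact Finset.sum_congr rfl fun p _ => by ring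
    rw [e]
    have := mul_le_mul_of_nonneg_left (hC N) hN'.le
    linarith
  rw [abs_le]
  constructor
  · have : N * (Real.log N - mA N) ≤ N * (1 + C) := by linarith
    have := le_of_mul_le_mul_left this hN'
    have := le_max_right (Real.log 4) (1 + C)
    linarith
  · have : N * (mA N - Real.log N) ≤ N * Real.log 4 := by linarith
    have := le_of_mul_le_mul_left this hN'
    exact this.trans (le_max_left _ _)
def U (N : ℕ) : ℝ := ∑ n ∈ Finset.range N, if n.Prime then 1 / (n:ℝ) else 0

lemma shift2 (f : ℕ → ℝ) (N : ℕ) :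
    ∑ n ∈ Finset.range (N+2), (if n.Prime then f n else 0) =
    ∑ i ∈ Finset.range N, (if (i+2).Prime then f (i+2) else 0) := by
  rw [Finset.sum_range_succ', Finset.sum_range_succ']
  simp [Nat.not_prime_zero, Nat.not_prime_one]

lemma harm_eq (N : ℕ) : (harmonic N : ℝ) = ∑ i ∈ Finset.range N, 1 / ((i:ℝ) + 1) := by
  simp [harmonic]

lemma harm_shift (N : ℕ) : ∑ i ∈ Finset.range N, 1 / ((i:ℝ) + 2) = (harmonic (N+1) : ℝ) - 1 := by
  rw [harm_eq, Finset.sum_range_succ']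
  simp only [Nat.cast_zero, zero_add, div_one, add_sub_cancel_right]
  refine Finset.sum_congr rfl fun i _ => ?_
  push_cast; ring

lemma dirichlet_part : ∃ l : ℝ, Tendsto (fun N : ℕ => U (N+2) -
    ∑ i ∈ Finset.range N, 1 / (((i:ℝ)+2) * Real.log ((i:ℝ)+2))) atTop (𝓝 l) := by
  obtain ⟨C, hC⟩ := mertens1
  have hlog : ∀ i : ℕ, 0 < Real.log ((i:ℝ)+2) := fun i => Real.log_pos (by
    have : (0:ℝ) ≤ i := by positivity
    linarith)
  have hanti : Antitone (fun i : ℕ => 1 / Real.log ((i:ℝ)+2)) := by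
    intro i j hij
    have : (i:ℝ) ≤ j := by exact_mod_cast hij
    exact one_div_le_one_div_of_le (hlog i) (Real.log_le_log (by positivity) (by linarith))
  have h0 : Tendsto (fun i : ℕ => 1 / Real.log ((i:ℝ)+2)) atTop (𝓝 0) := by
    simp only [one_div]
    refine tendsto_inv_atTop_zero.comp (Real.tendsto_log_atTop.comp ?_)
    exact tendsto_atTop_add_const_right _ _ tendsto_natCast_atTop_atTop
  have hb : ∀ n, ‖∑ i ∈ Finset.range n, ((if (i+2).Prime then Real.log ((i+2:ℕ):ℝ) / ((i+2:ℕ):ℝ) else 0)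
      - 1 / ((i:ℝ)+2))‖ ≤ C + 1 := by
    intro n
    rw [Finset.sum_sub_distrib, ← shift2 (fun n => Real.log n / n), harm_shift,
      ← Finset.sum_filter]
    change ‖mA (n+1) - _‖ ≤ _
    have h1 := abs_le.1 (hC (n+1) (by omega))
    have h2 := harmonic_le_one_add_log (n+1)
    have h3 : Real.log ((n+1 : ℕ) : ℝ) ≤ (harmonic (n+1) : ℝ) := by
      refine le_trans ?_ (log_add_one_le_harmonic (n+1))
      exact Real.log_le_log (by positivity) (by push_cast; linarith)
    rw [Real.norm_eq_abs, abs_le]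
    constructor <;> linarith
  have := hanti.cauchySeq_series_mul_of_tendsto_zero_of_bounded h0 hb
  obtain ⟨l, hl⟩ := cauchySeq_tendsto_of_complete this
  refine ⟨l, hl.congr fun N => ?_⟩
  rw [U, shift2 (fun n => 1 / (n:ℝ)), ← Finset.sum_sub_distrib]
  refine Finset.sum_congr rfl fun i _ => ?_
  have := (hlog i).ne'
  have h2 : (i:ℝ) + 2 ≠ 0 := by positivity
  push_cast
  simp only [smul_eq_mul]
  split_ifs
  · field_simp
  · field_simp; ring

lemma loglog_step {x : ℝ} (hx : 1 < x) :
    1 / ((x+1) * Real.log (x+1)) ≤ Real.log (Real.log (x+1)) - Real.log (Real.log x) ∧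
    Real.log (Real.log (x+1)) - Real.log (Real.log x) ≤ 1 / (x * Real.log x) := by
  have l1 := Real.log_pos hx
  have l2 := Real.log_pos (show 1 < x + 1 by linarith)
  have x0 : 0 < x := by linarith
  have d1 : Real.log (x+1) - Real.log x ≤ 1 / x := by
    rw [← Real.log_div (by linarith) (by linarith)]
    refine (Real.log_le_sub_one_of_pos (by positivity)).trans (le_of_eq ?_)
    field_simp; ring
  have d2 : 1 / (x+1) ≤ Real.log (x+1) - Real.log x := by
    rw [← Real.log_div (by linarith) (by linarith)]
    refine le_trans (le_of_eq ?_) (Real.one_sub_inv_le_log_of_pos (by positivity))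
    field_simp; ring
  rw [← Real.log_div l2.ne' l1.ne']
  constructor
  · refine le_trans ?_ (Real.one_sub_inv_le_log_of_pos (by positivity))
    have : 1 - (Real.log (x+1) / Real.log x)⁻¹ = (Real.log (x+1) - Real.log x) / Real.log (x+1) := by
      field_simp
    rw [this, ← div_div]
    gcongr
  · refine (Real.log_le_sub_one_of_pos (by positivity)).trans ?_
    have : Real.log (x+1) / Real.log x - 1 = (Real.log (x+1) - Real.log x) / Real.log x := by
      field_simp
    rw [this, ← div_div]
    gcongr

lemma loglog_part : ∃ l : ℝ, Tendsto (fun N : ℕ =>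
    ∑ i ∈ Finset.range N, 1 / (((i:ℝ)+2) * Real.log ((i:ℝ)+2)) - Real.log (Real.log ((N:ℝ)+2)))
    atTop (𝓝 l) := by
  have hx : ∀ N : ℕ, 1 < (N:ℝ) + 2 := fun N => by
    have : (0:ℝ) ≤ N := by positivity
    linarith
  set g : ℕ → ℝ := fun N : ℕ =>
    ∑ i ∈ Finset.range N, 1 / (((i:ℝ)+2) * Real.log ((i:ℝ)+2)) - Real.log (Real.log ((N:ℝ)+2)) with hg
  have hmono : Monotone g := by
    refine monotone_nat_of_le_succ fun N => ?_
    have h := (loglog_step (hx N)).2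
    simp only [hg, Finset.sum_range_succ]
    push_cast
    have e : (N:ℝ) + 1 + 2 = N + 2 + 1 := by ring
    rw [e]; linarith
  have hbd : ∀ N : ℕ, g N + 1 / (((N:ℝ)+2) * Real.log ((N:ℝ)+2)) ≤
      g 0 + 1 / (2 * Real.log 2) := by
    intro N
    induction N with
    | zero => simp
    | succ N ih =>
      refine le_trans ?_ ih
      have h := (loglog_step (hx N)).1
      simp only [hg, Finset.sum_range_succ]
      push_cast
      have e : (N:ℝ) + 1 + 2 = N + 2 + 1 := by ring
      rw [e]; linarith
  refine ⟨_, tendsto_atTop_ciSup hmono ⟨g 0 + 1 / (2 * Real.log 2), ?_⟩⟩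
  rintro _ ⟨N, rfl⟩
  have := Real.log_pos (hx N)
  have h0 : 0 ≤ 1 / (((N:ℝ)+2) * Real.log ((N:ℝ)+2)) := by positivity
  linarith [hbd N]

lemma mertens2 : ∃ M : ℝ, Tendsto (fun N : ℕ => U N - Real.log (Real.log N)) atTop (𝓝 M) := by
  obtain ⟨l, hl⟩ := dirichlet_part
  obtain ⟨k, hk⟩ := loglog_part
  refine ⟨l + k, ?_⟩
  rw [← tendsto_add_atTop_iff_nat 2]
  refine (hl.add hk).congr fun N => ?_
  push_cast; ring

lemma U_mono : Monotone U := by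
  refine monotone_nat_of_le_succ fun N => ?_
  rw [U, U, Finset.sum_range_succ]
  have : (0:ℝ) ≤ if N.Prime then 1 / (N:ℝ) else 0 := by split_ifs <;> positivity
  linarith

lemma floor_log_ratio : Tendsto (fun x : ℝ => Real.log (⌊x⌋₊ + 1 : ℝ) / Real.log x) atTop (𝓝 1) := by
  have hu : Tendsto (fun x : ℝ => 1 + Real.log 2 / Real.log x) atTop (𝓝 1) := by
    have := (tendsto_const_nhds (x := Real.log 2)).div_atTop Real.tendsto_log_atTop
    simpa using this.const_add 1
  refine tendsto_of_tendsto_of_tendsto_of_le_of_le' tendsto_const_nhds hu ?_ ?_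
  · filter_upwards [eventually_gt_atTop 1] with x hx
    rw [le_div_iff₀ (Real.log_pos hx), one_mul]
    exact Real.log_le_log (by linarith) (Nat.lt_floor_add_one x).le
  · filter_upwards [eventually_gt_atTop 1] with x hx
    have hl := Real.log_pos hx
    have hx0 : 0 < x := by linarith
    rw [div_le_iff₀ hl, add_mul, div_mul_cancel₀ _ hl.ne', one_mul, add_comm,
      ← Real.log_mul (by positivity) (by positivity)]
    apply Real.log_le_log (by positivity)
    have := Nat.floor_le (show 0 ≤ x by linarith)
    linarith

/-- U(e^t) - log t → M -/
lemma U_exp {M : ℝ} (hM : Tendsto (fun N : ℕ => U N - Real.log (Real.log N)) atTop (𝓝 M)) :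
    Tendsto (fun t : ℝ => U (⌊Real.exp t⌋₊ + 1) - Real.log t) atTop (𝓝 M) := by
  have h1 : Tendsto (fun t : ℝ => ⌊Real.exp t⌋₊ + 1) atTop atTop :=
    (tendsto_add_atTop_nat 1).comp (tendsto_nat_floor_atTop.comp Real.tendsto_exp_atTop)
  have h2 := hM.comp h1
  have h3 := (Real.continuousAt_log one_ne_zero).tendsto.comp
    (floor_log_ratio.comp Real.tendsto_exp_atTop)
  have h4 := h2.add h3
  rw [Real.log_one, add_zero] at h4
  refine h4.congr' ?_
  filter_upwards [eventually_gt_atTop 0] with t ht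
  simp only [Function.comp, Real.log_exp]
  have : 1 < Real.exp t := Real.one_lt_exp_iff.2 ht
  have h5 := Nat.lt_floor_add_one (Real.exp t)
  have h6 : 0 < Real.log (⌊Real.exp t⌋₊ + 1 : ℝ) := Real.log_pos (by linarith)
  rw [Real.log_div h6.ne' ht.ne']
  push_cast; ring

lemma harm_floor : Tendsto (fun t : ℝ => (harmonic ⌊t⌋₊ : ℝ) - Real.log t) atTop
    (𝓝 Real.eulerMascheroniConstant) := by
  have h2 := Real.tendsto_harmonic_sub_log_add_one.comp (tendsto_nat_floor_atTop (α := ℝ))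
  have h3 : Tendsto (fun t : ℝ => Real.log (⌊t⌋₊ + 1 : ℝ) - Real.log t) atTop (𝓝 0) := by
    have h : Tendsto (fun t : ℝ => Real.log ((⌊t⌋₊ + 1 : ℝ) / t)) atTop (𝓝 0) := by
      have : Tendsto (fun t : ℝ => (⌊t⌋₊ + 1 : ℝ) / t) atTop (𝓝 1) := by
        have a := (tendsto_nat_floor_div_atTop (R := ℝ)).add
          (tendsto_inv_atTop_zero (𝕜 := ℝ))
        rw [add_zero] at a
        refine a.congr fun t => ?_
        ring
      have h := (Real.continuousAt_log one_ne_zero).tendsto.comp this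
      rw [Real.log_one] at h
      exact h
    refine h.congr' ?_
    filter_upwards [eventually_gt_atTop 0] with t ht
    rw [Real.log_div (by positivity) ht.ne']
  have := h2.add h3
  rw [add_zero] at this
  refine this.congr fun t => ?_
  simp only [Function.comp]; ring
lemma one_sub_exp_log : Tendsto (fun σ : ℝ => Real.log (1 - Real.exp (-σ)) - Real.log σ)
    (𝓝[>] 0) (𝓝 0) := by
  have hd : HasDerivAt (fun σ : ℝ => 1 - Real.exp (-σ)) 1 0 := by
    have := ((hasDerivAt_neg (0:ℝ)).exp).const_sub 1
    simpa using this
  have h1 := (hasDerivAt_iff_tendsto_slope_zero.1 hd).mono_left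
    (nhdsWithin_mono (0:ℝ) (s := Set.Ioi 0) (fun x hx => ne_of_gt hx))
  have h2 := (Real.continuousAt_log one_ne_zero).tendsto.comp h1
  rw [Real.log_one] at h2
  refine h2.congr' ?_
  filter_upwards [self_mem_nhdsWithin] with σ hσ
  have hσ : 0 < σ := hσ
  have : Real.exp (-σ) < 1 := Real.exp_lt_one_iff.2 (by linarith)
  simp only [Function.comp, zero_add, neg_zero, Real.exp_zero, sub_self, sub_zero, smul_eq_mul]
  rw [Real.log_mul (by positivity) (by linarith), Real.log_inv]
  ring

lemma a_term (σ : ℝ) (i : ℕ) : (if i.Prime then 1 / (i:ℝ) else 0) * Real.exp (-(σ * Real.log i)) =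
    if i.Prime then 1 / (i:ℝ) ^ (1 + σ) else 0 := by
  split_ifs with h
  · have : (0:ℝ) < i := by exact_mod_cast h.pos
    rw [Real.rpow_add this, Real.rpow_one, Real.exp_neg, mul_comm σ, ← Real.rpow_def_of_pos this]
    field_simp
  · simp

lemma b_sum {σ : ℝ} (hσ : 0 < σ) : HasSum (fun i : ℕ => 1 / ((i:ℝ)+1) * Real.exp (-(σ * ((i:ℝ)+1))))
    (-Real.log (1 - Real.exp (-σ))) := by
  have := Real.hasSum_pow_div_log_of_abs_lt_one (x := Real.exp (-σ)) (by
    rw [abs_of_pos (Real.exp_pos _)]; exact Real.exp_lt_one_iff.2 (by linarith))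
  refine this.congr_fun ?_ 
  intro i
  rw [← Real.exp_nat_mul]
  push_cast
  rw [show ((i:ℝ)+1) * -σ = -(σ * (i+1)) by ring]
  ring

lemma U_tsum {t : ℝ} :
    (∑' i : ℕ, if Real.log i ≤ t then (if i.Prime then 1 / (i:ℝ) else 0) else 0) =
      U (⌊Real.exp t⌋₊ + 1) := by
  have key : ∀ i : ℕ, i.Prime → (Real.log i ≤ t ↔ i ∈ Finset.range (⌊Real.exp t⌋₊ + 1)) := by
    intro i hi
    have : (0:ℝ) < i := by exact_mod_cast hi.pos
    rw [Real.log_le_iff_le_exp this, Finset.mem_range, Nat.lt_succ_iff,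
      Nat.le_floor_iff (Real.exp_pos _).le]
  rw [tsum_eq_sum (s := Finset.range (⌊Real.exp t⌋₊ + 1)), U]
  · refine Finset.sum_congr rfl fun i hi => ?_
    by_cases h : i.Prime
    · rw [if_pos ((key i h).2 hi)]
    · simp [h]
  · intro i hi
    by_cases h : i.Prime
    · rw [if_neg (fun h' => hi ((key i h).1 h'))]
    · simp [h]

lemma H_tsum {t : ℝ} (ht : 0 ≤ t) :
    (∑' i : ℕ, if (i:ℝ) + 1 ≤ t then 1 / ((i:ℝ)+1) else 0) = (harmonic ⌊t⌋₊ : ℝ) := by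
  have key : ∀ i : ℕ, ((i:ℝ) + 1 ≤ t ↔ i ∈ Finset.range ⌊t⌋₊) := by
    intro i
    rw [Finset.mem_range, ← Nat.succ_le_iff, Nat.le_floor_iff ht]
    push_cast; rfl
  rw [tsum_eq_sum (s := Finset.range ⌊t⌋₊), harm_eq]
  · refine Finset.sum_congr rfl fun i hi => ?_
    rw [if_pos ((key i).2 hi)]
  · intro i hi
    rw [if_neg (fun h' => hi ((key i).1 h'))]

lemma const_eq {M : ℝ} (hM : Tendsto (fun N : ℕ => U N - Real.log (Real.log N)) atTop (𝓝 M)) :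
    M + ∑' n, eE 1 n = Real.eulerMascheroniConstant := by
  set F : ℝ → ℝ := fun t => U (⌊Real.exp t⌋₊ + 1) - (harmonic ⌊t⌋₊ : ℝ) with hF
  have hL : Tendsto F atTop (𝓝 (M - Real.eulerMascheroniConstant)) := by
    refine ((U_exp hM).sub harm_floor).congr fun t => ?_
    simp only [hF]; ring
  have hU0 : ∀ n, 0 ≤ U n := fun n => by
    have := U_mono (Nat.zero_le n)
    simpa [U] using this
  have hH : Monotone (fun n : ℕ => (harmonic n : ℝ)) := by
    refine monotone_nat_of_le_succ fun n => ?_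
    rw [harm_eq, harm_eq, Finset.sum_range_succ]
    have : (0:ℝ) ≤ 1 / ((n:ℝ)+1) := by positivity
    linarith
  have hH0 : ∀ n : ℕ, (0:ℝ) ≤ (harmonic n : ℝ) := fun n => by
    have := hH (Nat.zero_le n)
    simpa using this
  obtain ⟨C, hC⟩ : ∃ C, ∀ t, 0 ≤ t → |F t| ≤ C := by
    have h1 : ∀ᶠ t in atTop, |F t| ≤ |M - Real.eulerMascheroniConstant| + 1 :=
      hL.abs.eventually (eventually_le_nhds (by linarith))
    obtain ⟨T, hT⟩ := eventually_atTop.1 h1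
    refine ⟨max (|M - Real.eulerMascheroniConstant| + 1)
      (U (⌊Real.exp T⌋₊ + 1) + (harmonic ⌊T⌋₊ : ℝ)), fun t ht => ?_⟩
    rcases le_total T t with h | h
    · exact (hT t h).trans (le_max_left _ _)
    · refine le_trans ?_ (le_max_right _ _)
      have e1 : U (⌊Real.exp t⌋₊ + 1) ≤ U (⌊Real.exp T⌋₊ + 1) := U_mono (by gcongr)
      have e2 : (harmonic ⌊t⌋₊ : ℝ) ≤ harmonic ⌊T⌋₊ := hH (Nat.floor_mono h)
      have e3 := hU0 (⌊Real.exp t⌋₊ + 1)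
      have e4 := hH0 ⌊t⌋₊
      simp only [hF]
      rw [abs_le]; constructor <;> linarith
  have main := abel_cmp (a := fun i : ℕ => if i.Prime then 1 / (i:ℝ) else 0)
    (l := fun i => Real.log i) (b := fun i => 1 / ((i:ℝ)+1)) (k := fun i => (i:ℝ)+1)
    (fun i => by positivity) (fun i => Real.log_natCast_nonneg i)
    (fun i => by positivity) (fun i => by positivity)
    (fun σ hσ => by
      simp only [a_term]
      exact pp_summable (by linarith))
    (fun σ hσ => (b_sum hσ).summable)
    ⟨2, by norm_num⟩ ⟨0, by norm_num⟩ F (fun t ht => by rw [U_tsum, H_tsum ht]) C hC _ hL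
  have h1 := (primezeta.sub main).add one_sub_exp_log
  have h2 : Tendsto (fun σ : ℝ => (0:ℝ)) (𝓝[>] (0:ℝ)) (𝓝 (-∑' n, eE 1 n -
      (M - Real.eulerMascheroniConstant) + 0)) := by
    refine h1.congr' ?_
    filter_upwards [self_mem_nhdsWithin] with σ hσ
    rw [(b_sum hσ).tsum_eq]
    simp only [a_term]
    ring
  have := tendsto_nhds_unique h2 tendsto_const_nhds
  linarith

lemma mertens3 : Tendsto (fun N : ℕ => (∏ p ∈ N.primesBelow, (1 + 1 / (p:ℝ))) / Real.log N) atTop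
    (𝓝 (Real.exp Real.eulerMascheroniConstant / zr 2)) := by
  obtain ⟨M, hM⟩ := mertens2
  have hz : (1:ℝ) < 2 := by norm_num
  have h1 := (hM.add (eE_summable le_rfl).hasSum.tendsto_sum_nat).sub
    (log_zr hz).tendsto_sum_nat
  rw [const_eq hM] at h1
  have h2 := (Real.continuous_exp.tendsto _).comp h1
  rw [Real.exp_sub, Real.exp_log (zr_pos hz)] at h2
  refine h2.congr' ?_
  filter_upwards [eventually_gt_atTop 1] with N hN
  have hN' : (1:ℝ) < N := by exact_mod_cast hN
  have hl := Real.log_pos hN'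
  have hpp : 0 < ∏ p ∈ N.primesBelow, (1 + 1 / (p:ℝ)) := Finset.prod_pos fun p _ => by positivity
  rw [← Real.exp_log (div_pos hpp hl), Real.log_div hpp.ne' hl.ne', logprod N (fun n => 1 + 1 / (n:ℝ))
    (fun n _ => by positivity)]
  simp only [Function.comp]
  congr 1
  rw [U]
  have : ∀ a b c d e: ℝ, a + c - d = e → a - b + c - d = e - b := by intros; linarith
  apply this
  rw [← Finset.sum_add_distrib, ← Finset.sum_sub_distrib]
  refine Finset.sum_congr rfl fun n _ => ?_
  unfold eE
  split_ifs with h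
  · have h2 : (2:ℝ) ≤ n := by exact_mod_cast h.two_le
    have h3 : 1 / (n:ℝ) ≤ 1 / 2 := one_div_le_one_div_of_le (by norm_num) h2
    have e : (1:ℝ) - 1 / (n:ℝ) ^ (2:ℝ) = (1 + 1 / n) * (1 - 1 / n) := by
      rw [Real.rpow_two]; field_simp; ring
    rw [e, Real.log_mul (by positivity) (by linarith), Real.rpow_one]
    ring
  · ring
open ArithmeticFunction in
lemma moeb_sum (b : ℕ) (hb : 0 < b) : (∑ d ∈ b.divisors, (moebius d : ℝ)) = if b = 1 then 1 else 0 := by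
  have h := congrArg (fun f => f b) moebius_mul_coe_zeta
  simp only [coe_mul_zeta_apply, one_apply] at h
  have h' := congrArg (fun z : ℤ => (z : ℝ)) h
  push_cast at h'
  rw [h']

lemma sq_dvd_aux {a b d : ℕ} (ha : Squarefree a) (ha0 : 0 < a) (hb : 0 < b) (hd : 0 < d) :
    d ^ 2 ∣ b ^ 2 * a ↔ d ∣ b := by
  constructor
  · intro h
    rw [← Nat.factorization_le_iff_dvd (by positivity) (by positivity)] at h
    rw [← Nat.factorization_le_iff_dvd (by positivity) (by positivity)]
    intro p
    have h1 := h p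
    rw [Nat.factorization_mul (by positivity) (by positivity), Nat.factorization_pow,
      Nat.factorization_pow] at h1
    simp at h1
    have h2 := ha.natFactorization_le_one p
    omega
  · intro h
    exact (pow_dvd_pow_of_dvd h 2).mul_right _

open ArithmeticFunction in
lemma sqf_ind {N n : ℕ} (hn : n ∈ Finset.Icc 1 N) : (if Squarefree n then (1:ℝ) else 0) =
    ∑ d ∈ Finset.Icc 1 N, if d ^ 2 ∣ n then (moebius d : ℝ) else 0 := by
  obtain ⟨hn1, hnN⟩ := Finset.mem_Icc.1 hn
  obtain ⟨a, b, ha, hb, hab, hsq⟩ := Nat.sq_mul_squarefree_of_pos hn1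
  have hbn : b ≤ n := by rw [← hab]; nlinarith [Nat.mul_pos hb ha]
  have e : (∑ d ∈ Finset.Icc 1 N, if d ^ 2 ∣ n then (moebius d : ℝ) else 0) =
      ∑ d ∈ b.divisors, (moebius d : ℝ) := by
    rw [← Finset.sum_filter]
    refine Finset.sum_congr ?_ fun _ _ => rfl
    ext d
    simp only [Finset.mem_filter, Finset.mem_Icc, Nat.mem_divisors]
    constructor
    · rintro ⟨⟨h1, h2⟩, h3⟩
      rw [← hab, sq_dvd_aux hsq ha hb h1] at h3
      exact ⟨h3, by omega⟩
    · rintro ⟨h1, h2⟩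
      have h3 := Nat.le_of_dvd hb h1
      have h4 := Nat.pos_of_dvd_of_pos h1 hb
      refine ⟨⟨h4, by omega⟩, ?_⟩
      rw [← hab, sq_dvd_aux hsq ha hb h4]; exact h1
  rw [e, moeb_sum b hb]
  have : Squarefree n ↔ b = 1 := by
    constructor
    · intro h
      have := h b ⟨a, by rw [← hab]; ring⟩
      simpa using this
    · rintro rfl
      rw [← hab]; simpa using hsq
  simp [this]

lemma harm_Icc (N : ℕ) : (harmonic N : ℝ) = ∑ k ∈ Finset.Icc 1 N, 1 / (k:ℝ) := by
  rw [harmonic_eq_sum_Icc]; push_cast; simp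

lemma inner_sqsum {N d : ℕ} (hd : 0 < d) :
    (∑ n ∈ Finset.Icc 1 N, if d ^ 2 ∣ n then 1 / (n:ℝ) else 0) =
      1 / (d:ℝ) ^ 2 * (harmonic (N / d ^ 2) : ℝ) := by
  have hd2 : 0 < d ^ 2 := by positivity
  rw [harm_Icc, Finset.mul_sum, ← Finset.sum_filter]
  symm
  refine Finset.sum_bij (fun k _ => d ^ 2 * k) ?_ ?_ ?_ ?_
  · intro k hk
    obtain ⟨h1, h2⟩ := Finset.mem_Icc.1 hk
    rw [Nat.le_div_iff_mul_le hd2] at h2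
    simp only [Finset.mem_filter, Finset.mem_Icc]
    exact ⟨⟨Nat.mul_pos hd2 h1, by linarith⟩, dvd_mul_right _ _⟩
  · intro k _ k' _ h
    exact Nat.eq_of_mul_eq_mul_left hd2 h
  · intro n hn
    simp only [Finset.mem_filter, Finset.mem_Icc] at hn
    obtain ⟨⟨h1, h2⟩, k, rfl⟩ := hn
    refine ⟨k, ?_, rfl⟩
    rw [Finset.mem_Icc, Nat.le_div_iff_mul_le hd2]
    exact ⟨Nat.pos_of_mul_pos_left h1, by linarith⟩
  · intro k _
    push_cast
    rw [div_mul_div_comm, one_mul]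

def Q (N : ℕ) : ℝ := ∑ n ∈ (Finset.Icc 1 N).filter Squarefree, 1 / (n:ℝ)

open ArithmeticFunction in
lemma Q_eq (N : ℕ) : Q N =
    ∑' d : ℕ, (moebius d : ℝ) * (1 / (d:ℝ) ^ 2 * (harmonic (N / d ^ 2) : ℝ)) := by
  rw [tsum_eq_sum (s := Finset.Icc 1 N)]
  · calc Q N = ∑ n ∈ Finset.Icc 1 N, (if Squarefree n then (1:ℝ) else 0) * (1 / (n:ℝ)) := by
          rw [Q, Finset.sum_filter]
          refine Finset.sum_congr rfl fun n _ => ?_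
          split_ifs <;> simp
      _ = ∑ n ∈ Finset.Icc 1 N, ∑ d ∈ Finset.Icc 1 N,
            (moebius d : ℝ) * (if d ^ 2 ∣ n then 1 / (n:ℝ) else 0) := by
          refine Finset.sum_congr rfl fun n hn => ?_
          rw [sqf_ind hn, Finset.sum_mul]
          refine Finset.sum_congr rfl fun d _ => ?_
          split_ifs <;> simp
      _ = _ := by
          rw [Finset.sum_comm]
          refine Finset.sum_congr rfl fun d hd => ?_
          rw [← Finset.mul_sum, inner_sqsum (Finset.mem_Icc.1 hd).1]
  · intro d hd
    rcases Nat.eq_zero_or_pos d with rfl | h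
    · simp
    · have hdN : N < d := by
        by_contra h'
        exact hd (Finset.mem_Icc.2 ⟨h, by omega⟩)
      have : N / d ^ 2 = 0 := Nat.div_eq_of_lt (by nlinarith)
      simp [this]

open ArithmeticFunction in
lemma moeb_tsum : ∑' d : ℕ, (moebius d : ℝ) * (1 / (d:ℝ) ^ 2) = 1 / zr 2 := by
  have h := LSeries_one_mul_Lseries_moebius (s := 2) (by norm_num)
  have h1 : LSeries 1 2 = ((zr 2 : ℝ) : ℂ) := by
    rw [LSeries, zr, Complex.ofReal_tsum]
    refine tsum_congr fun n => ?_
    rcases Nat.eq_zero_or_pos n with rfl | h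
    · simp
    · rw [LSeries.term_of_ne_zero (by omega)]
      simp
  have h2 : LSeries (fun n => ((moebius n : ℤ) : ℂ)) 2 =
      ((∑' d : ℕ, (moebius d : ℝ) * (1 / (d:ℝ) ^ 2) : ℝ) : ℂ) := by
    rw [LSeries, Complex.ofReal_tsum]
    refine tsum_congr fun n => ?_
    rcases Nat.eq_zero_or_pos n with rfl | h
    · simp
    · rw [LSeries.term_of_ne_zero (by omega)]
      simp [div_eq_mul_inv]
  rw [h1, h2] at h
  have h3 : zr 2 * ∑' d : ℕ, (moebius d : ℝ) * (1 / (d:ℝ) ^ 2) = 1 := by exact_mod_cast h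
  have := zr_pos (s := 2) (by norm_num)
  rw [eq_div_iff this.ne', mul_comm]
  exact h3

lemma harm_div (d : ℕ) (hd : 0 < d) :
    Tendsto (fun N : ℕ => (harmonic (N / d ^ 2) : ℝ) / Real.log N) atTop (𝓝 1) := by
  have hlogN : Tendsto (fun N : ℕ => Real.log (N:ℝ)) atTop atTop :=
    Real.tendsto_log_atTop.comp tendsto_natCast_atTop_atTop
  have hd' : (0:ℝ) < (d:ℝ)^2 := by positivity
  have h1 : Tendsto (fun N : ℕ => (N:ℝ) / (d:ℝ)^2) atTop atTop :=
    tendsto_natCast_atTop_atTop.atTop_div_const hd'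
  have h2 := ((harm_floor.comp h1).div_atTop hlogN)
  have h3 := (tendsto_const_nhds (x := Real.log ((d:ℝ)^2))).div_atTop hlogN
  have h4 := (h2.sub h3).add_const 1
  simp only [sub_zero, zero_add] at h4
  refine h4.congr' ?_
  filter_upwards [eventually_gt_atTop 1] with N hN
  have hN' : (1:ℝ) < N := by exact_mod_cast hN
  have hl := Real.log_pos hN'
  simp only [Function.comp]
  have e : ⌊(N:ℝ) / (d:ℝ)^2⌋₊ = N / d ^ 2 := by
    rw [← Nat.floor_div_eq_div (K := ℝ)]; push_cast; rfl
  rw [e, Real.log_div (by linarith) hd'.ne']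
  field_simp
  ring

open ArithmeticFunction in
lemma Q_asymp : Tendsto (fun N : ℕ => Q N / Real.log N) atTop (𝓝 (1 / zr 2)) := by
  have hs : Summable (fun d : ℕ => 2 * (1 / (d:ℝ) ^ 2)) :=
    (Real.summable_one_div_nat_pow.2 (by norm_num)).mul_left _
  have main : Tendsto (fun N : ℕ => ∑' d : ℕ,
      (moebius d : ℝ) * (1 / (d:ℝ) ^ 2) * ((harmonic (N / d ^ 2) : ℝ) / Real.log N)) atTop
      (𝓝 (∑' d : ℕ, (moebius d : ℝ) * (1 / (d:ℝ) ^ 2))) := by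
    refine tendsto_tsum_of_dominated_convergence hs ?_ ?_
    · intro d
      rcases Nat.eq_zero_or_pos d with rfl | h
      · simp
      · have := (harm_div d h).const_mul ((moebius d : ℝ) * (1 / (d:ℝ) ^ 2))
        rw [mul_one] at this
        exact this
    · filter_upwards [eventually_ge_atTop 3] with N hN d
      have hN' : (3:ℝ) ≤ N := by exact_mod_cast hN
      have hl : 1 ≤ Real.log N := by
        rw [Real.le_log_iff_exp_le (by linarith)]
        linarith [Real.exp_one_lt_d9]
      have hh : (harmonic (N / d ^ 2) : ℝ) ≤ 1 + Real.log N := by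
        refine le_trans ?_ (harmonic_le_one_add_log N)
        rw [harm_Icc, harm_Icc]
        exact Finset.sum_le_sum_of_subset_of_nonneg
          (Finset.Icc_subset_Icc le_rfl (Nat.div_le_self _ _)) (fun _ _ _ => by positivity)
      have hh0 : (0:ℝ) ≤ (harmonic (N / d ^ 2) : ℝ) := by
        rw [harm_Icc]; positivity
      have hm : |(moebius d : ℝ)| ≤ 1 := by
        exact_mod_cast (abs_moebius_le_one (n := d))
      have hq : (harmonic (N / d ^ 2) : ℝ) / Real.log N ≤ 2 := by
        rw [div_le_iff₀ (by linarith)]; linarith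
      rw [norm_mul, norm_mul, Real.norm_eq_abs, Real.norm_of_nonneg (by positivity : (0:ℝ) ≤ 1 / (d:ℝ)^2),
        Real.norm_of_nonneg (by positivity)]
      calc _ ≤ 1 * (1 / (d:ℝ)^2) * 2 := by gcongr
        _ = _ := by ring
  rw [moeb_tsum] at main
  refine main.congr fun N => ?_
  rw [Q_eq, ← tsum_div_const]
  refine tsum_congr fun d => ?_
  ring

lemma np_prime (j : ℕ) : (nthPrime j).Prime := Nat.prime_nth_prime j

lemma np_inj {i j : ℕ} (h : nthPrime i = nthPrime j) : i = j :=
  Nat.nth_injective Nat.infinite_setOf_prime h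

lemma np_mono : StrictMono nthPrime := Nat.nth_strictMono Nat.infinite_setOf_prime

lemma np_surj {p : ℕ} (hp : p.Prime) : ∃ j, nthPrime j = p :=
  ⟨_, Nat.nth_count hp⟩

lemma Zm_eq (m : ℕ) (hm : 0 < m) :
    Zm m = ∏ p ∈ (nthPrime (m - 1) + 1).primesBelow, (1 + 1 / (p:ℝ)) := by
  rw [Zm]
  refine Finset.prod_bij (fun j _ => nthPrime j) ?_ ?_ ?_ ?_
  · intro j hj
    rw [Nat.mem_primesBelow]
    refine ⟨Nat.lt_succ_of_le (np_mono.monotone ?_), np_prime j⟩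
    have := Finset.mem_range.1 hj
    omega
  · intro i _ j _ h
    exact np_inj h
  · intro p hp
    rw [Nat.mem_primesBelow] at hp
    obtain ⟨j, rfl⟩ := np_surj hp.2
    refine ⟨j, ?_, rfl⟩
    have := np_mono.le_iff_le.1 (Nat.le_of_lt_succ hp.1)
    rw [Finset.mem_range]; omega
  · intro j _
    rfl

lemma elt_eq (m : ℕ) (ν : Fin m → Bool) :
    elt m ν = ∏ p ∈ (Finset.univ.filter (fun j : Fin m => ν j = true)).image
      (fun j : Fin m => nthPrime j), p := by
  rw [elt, Finset.prod_image, Finset.prod_filter]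
  intro i _ j _ h
  exact Fin.ext (np_inj h)

lemma dvd_elt (m : ℕ) (ν : Fin m → Bool) (i : Fin m) : nthPrime i ∣ elt m ν ↔ ν i = true := by
  rw [elt_eq, (np_prime i).prime.dvd_finset_prod_iff]
  constructor
  · rintro ⟨p, hp, hd⟩
    simp only [Finset.mem_image, Finset.mem_filter, Finset.mem_univ, true_and] at hp
    obtain ⟨j, hj, rfl⟩ := hp
    have := (Nat.prime_dvd_prime_iff_eq (np_prime _) (np_prime _)).1 hd
    rw [Fin.ext (np_inj this)]; exact hj
  · intro h
    exact ⟨nthPrime i, Finset.mem_image.2 ⟨i, by simp [h], rfl⟩, dvd_rfl⟩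

lemma elt_sqf (m : ℕ) (ν : Fin m → Bool) : Squarefree (elt m ν) := by
  rw [elt_eq]
  have hp : ∀ p ∈ (Finset.univ.filter (fun j : Fin m => ν j = true)).image
      (fun j : Fin m => nthPrime j), p.Prime := by
    intro p hp
    simp only [Finset.mem_image] at hp
    obtain ⟨j, _, rfl⟩ := hp
    exact np_prime j
  refine Finset.squarefree_prod_of_pairwise_isCoprime ?_ ?_
  · intro p h q h' hne
    exact Nat.coprime_iff_isRelPrime.1 ((Nat.coprime_primes (hp p h) (hp q h')).2 hne)
  · intro p h
    exact (hp p h).prime.squarefree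

lemma elt_surj (m n : ℕ) (hm : 0 < m) (hn : Squarefree n) (hle : n ≤ nthPrime (m - 1)) :
    elt m (fun j => decide (nthPrime j ∣ n)) = n := by
  have hn0 : n ≠ 0 := hn.ne_zero
  rw [elt_eq]
  conv_rhs => rw [← Nat.prod_primeFactors_of_squarefree hn]
  refine Finset.prod_congr ?_ fun _ _ => rfl
  ext p
  simp only [Finset.mem_image, Finset.mem_filter, Finset.mem_univ, true_and, decide_eq_true_eq,
    Nat.mem_primeFactors]
  constructor
  · rintro ⟨j, hj, rfl⟩
    exact ⟨np_prime j, hj, hn0⟩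
  · rintro ⟨hp, hd, _⟩
    obtain ⟨j, rfl⟩ := np_surj hp
    have h1 := (Nat.le_of_dvd (Nat.pos_of_ne_zero hn0) hd).trans hle
    have h2 := np_mono.le_iff_le.1 h1
    exact ⟨⟨j, by omega⟩, hd, rfl⟩

lemma sum_mass (m : ℕ) (hm : 0 < m) (x : ℝ) (hx0 : 0 ≤ x) (hx : x ≤ nthPrime (m - 1)) :
    (∑ ν ∈ Finset.univ.filter (fun ν : Fin m → Bool => (elt m ν : ℝ) ≤ x), mass m ν) =
      Q ⌊x⌋₊ / Zm m := by
  rw [Q, Finset.sum_div]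
  refine Finset.sum_bij (fun ν _ => elt m ν) ?_ ?_ ?_ ?_
  · intro ν hν
    have h := (Finset.mem_filter.1 hν).2
    have h1 := elt_sqf m ν
    rw [Finset.mem_filter, Finset.mem_Icc]
    exact ⟨⟨Nat.pos_of_ne_zero h1.ne_zero, Nat.le_floor h⟩, h1⟩
  · intro ν _ ν' _ h
    funext i
    have h1 := dvd_elt m ν i
    have h2 := dvd_elt m ν' i
    rw [h] at h1
    exact Bool.eq_iff_iff.2 (h1.symm.trans h2)
  · intro n hn
    rw [Finset.mem_filter, Finset.mem_Icc] at hn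
    have h1 : (n:ℝ) ≤ x := (Nat.le_floor_iff hx0).1 hn.1.2
    have h2 : n ≤ nthPrime (m - 1) := by exact_mod_cast h1.trans hx
    have h3 := elt_surj m n hm hn.2 h2
    refine ⟨_, ?_, h3⟩
    rw [Finset.mem_filter, h3]
    exact ⟨Finset.mem_univ _, h1⟩
  · intro ν _
    rw [mass, div_div, mul_comm]

lemma log_nat_succ : Tendsto (fun N : ℕ => Real.log ((N:ℝ) + 1) / Real.log N) atTop (𝓝 1) := by
  have := floor_log_ratio.comp tendsto_natCast_atTop_atTop
  refine this.congr fun N => ?_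
  simp

lemma floor_log_ratio2 :
    Tendsto (fun x : ℝ => Real.log (⌊x⌋₊ : ℝ) / Real.log x) atTop (𝓝 1) := by
  have h1 := log_nat_succ.comp (tendsto_nat_floor_atTop (α := ℝ))
  have h2 := floor_log_ratio.div h1 one_ne_zero
  rw [div_one] at h2
  refine h2.congr' ?_
  filter_upwards [eventually_ge_atTop 2] with x hx
  have hf : (2:ℕ) ≤ ⌊x⌋₊ := Nat.le_floor (by exact_mod_cast hx)
  have hf' : (2:ℝ) ≤ (⌊x⌋₊ : ℝ) := by exact_mod_cast hf
  have l1 : 0 < Real.log (⌊x⌋₊ : ℝ) := Real.log_pos (by linarith)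
  have l2 : 0 < Real.log ((⌊x⌋₊ : ℝ) + 1) := Real.log_pos (by linarith)
  have l3 : 0 < Real.log x := Real.log_pos (by linarith)
  simp only [Pi.div_apply, Function.comp]
  field_simp

lemma Zm_asymp : Tendsto (fun m : ℕ => Zm m / Real.log (nthPrime (m - 1))) atTop
    (𝓝 (Real.exp Real.eulerMascheroniConstant / zr 2)) := by
  have hp : Tendsto (fun m : ℕ => nthPrime (m - 1)) atTop atTop :=
    np_mono.tendsto_atTop.comp (tendsto_sub_atTop_nat 1)
  have h1 := mertens3.comp ((tendsto_add_atTop_nat 1).comp hp)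
  have h2 := h1.mul (log_nat_succ.comp hp)
  rw [mul_one] at h2
  refine h2.congr' ?_
  filter_upwards [eventually_gt_atTop 0] with m hm
  rw [Zm_eq m hm]
  simp only [Function.comp]
  have : (2:ℝ) ≤ nthPrime (m - 1) := by exact_mod_cast (np_prime (m - 1)).two_le
  have l2 : 0 < Real.log ((nthPrime (m - 1) : ℝ) + 1) := Real.log_pos (by linarith)
  push_cast
  field_simp

/-- `Π_m{ n ≤ p_m^s } → e^{-γ} s` as `m → ∞`, for `0 < s ≤ 1`. -/
theorem mass_below_pm_pow_s (s : ℝ) (hs0 : 0 < s) (hs1 : s ≤ 1) :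
    Tendsto (fun m : ℕ =>
        ∑ ν ∈ Finset.univ.filter
            (fun ν : Fin m → Bool => (elt m ν : ℝ) ≤ (nthPrime (m - 1) : ℝ) ^ s),
          mass m ν)
      atTop (𝓝 (Real.exp (-Real.eulerMascheroniConstant) * s)) := by
  have hp : Tendsto (fun m : ℕ => (nthPrime (m - 1) : ℝ)) atTop atTop :=
    tendsto_natCast_atTop_atTop.comp (np_mono.tendsto_atTop.comp (tendsto_sub_atTop_nat 1))
  have hx : Tendsto (fun m : ℕ => (nthPrime (m - 1) : ℝ) ^ s) atTop atTop :=
    (tendsto_rpow_atTop hs0).comp hp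
  have hz := zr_pos (s := 2) (by norm_num)
  have hE := Real.exp_pos Real.eulerMascheroniConstant
  have h1 := Q_asymp.comp ((tendsto_nat_floor_atTop (α := ℝ)).comp hx)
  have h2 := h1.mul (floor_log_ratio2.comp hx)
  have h3 := (h2.mul_const s).div Zm_asymp (by positivity)
  have e : 1 / zr 2 * 1 * s / (Real.exp Real.eulerMascheroniConstant / zr 2) =
      Real.exp (-Real.eulerMascheroniConstant) * s := by
    rw [Real.exp_neg]
    field_simp
  rw [e] at h3
  refine h3.congr' ?_
  filter_upwards [eventually_gt_atTop 0, hx.eventually_ge_atTop 2] with m hm hx2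
  have hp2 : (2:ℝ) ≤ nthPrime (m - 1) := by exact_mod_cast (np_prime (m - 1)).two_le
  rw [sum_mass m hm _ (by positivity) ?_]
  · simp only [Function.comp, Pi.div_apply]
    set x := (nthPrime (m - 1) : ℝ) ^ s with hxdef
    have hlx : Real.log x = s * Real.log (nthPrime (m - 1)) := by
      rw [hxdef, Real.log_rpow (by linarith)]
    have hf : (2:ℕ) ≤ ⌊x⌋₊ := Nat.le_floor (by exact_mod_cast hx2)
    have hf' : (2:ℝ) ≤ (⌊x⌋₊ : ℝ) := by exact_mod_cast hf
    have l1 : 0 < Real.log (⌊x⌋₊ : ℝ) := Real.log_pos (by linarith)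
    have l3 : 0 < Real.log (nthPrime (m - 1) : ℝ) := Real.log_pos (by linarith)
    have hZ : 0 < Zm m := by
      rw [Zm]
      exact Finset.prod_pos fun _ _ => by positivity
    rw [hlx]
    field_simp
  · calc (nthPrime (m - 1) : ℝ) ^ s ≤ (nthPrime (m - 1) : ℝ) ^ (1:ℝ) :=
          Real.rpow_le_rpow_of_exponent_le (by linarith) hs1
      _ = _ := Real.rpow_one _

end
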